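/- arXiv:1301.3675 — 7 statements merged into one kernel-verified Lean document; each statement's English description precedes it below -/
import Mathlib

section
/- Let X ∈ ℂ^{m×n}, Y ∈ ℂ^{m×p}, Z ∈ ℂ^{q×n} be variable matrices and let φ(X, Y, Z) = [X, Y; Z, 0] be the (m+q)×(n+p) block matrix. Then the maximum of r(φ(X, Y, Z)) over all choices of X, Y, Z equals min{ m + q, n + p, m + n }; that is, r(φ(X, Y, Z)) ≤ min{ m + q, n + p, m + n } always, and there exist X, Y, Z attaining this value. -/
/-!
The rank is at most the number of rows and at most the number of columns; it is at most `m + n`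
because `[X, Y; Z, 0] = [1, 0; 0, Z] * [X, Y; 1, 0]`, where the inner dimension is `m + n`.

For attainment, put `a = min m p`, `b = min q n`, `c = min (m - a) (n - b)`. Take for `Y` and `Z`
the rectangular identities, and let `X` have an identity block starting at position `(a, b)`. The
first `a` diagonal entries of `Y`, the first `b` of `Z` and the first `c` of the block in `X` lie
in pairwise distinct rows and columns, and the submatrix on those rows and columns is an identity
matrix of size `a + b + c`, which is the claimed maximum.
-/

open Matrix

theorem stmt2 (m n p q : ℕ) :
    (∀ (X : Matrix (Fin m) (Fin n) ℂ) (Y : Matrix (Fin m) (Fin p) ℂ)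
        (Z : Matrix (Fin q) (Fin n) ℂ),
      (fromBlocks X Y Z (0 : Matrix (Fin q) (Fin p) ℂ)).rank
        ≤ min (m + q) (min (n + p) (m + n))) ∧
    (∃ (X : Matrix (Fin m) (Fin n) ℂ) (Y : Matrix (Fin m) (Fin p) ℂ)
        (Z : Matrix (Fin q) (Fin n) ℂ),
      (fromBlocks X Y Z (0 : Matrix (Fin q) (Fin p) ℂ)).rank
        = min (m + q) (min (n + p) (m + n))) := by
  have upper : ∀ (X : Matrix (Fin m) (Fin n) ℂ) (Y : Matrix (Fin m) (Fin p) ℂ)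
      (Z : Matrix (Fin q) (Fin n) ℂ),
      (fromBlocks X Y Z (0 : Matrix (Fin q) (Fin p) ℂ)).rank
        ≤ min (m + q) (min (n + p) (m + n)) := by
    intro X Y Z
    refine le_min ?_ (le_min ?_ ?_)
    · simpa using rank_le_card_height (fromBlocks X Y Z (0 : Matrix (Fin q) (Fin p) ℂ))
    · simpa using rank_le_card_width (fromBlocks X Y Z (0 : Matrix (Fin q) (Fin p) ℂ))
    · have h : fromBlocks X Y Z (0 : Matrix (Fin q) (Fin p) ℂ)
          = fromBlocks (1 : Matrix (Fin m) (Fin m) ℂ) 0 0 Z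
            * fromBlocks X Y (1 : Matrix (Fin n) (Fin n) ℂ) 0 := by
        simp [fromBlocks_multiply]
      rw [h]
      refine (rank_mul_le_left _ _).trans ?_
      simpa using rank_le_card_width (fromBlocks (1 : Matrix (Fin m) (Fin m) ℂ) 0 0 Z)
  refine ⟨upper, ?_⟩
  obtain ⟨a, b, c, ham, hap, hbq, hbn, hcm, hcn, hr⟩ : ∃ a b c : ℕ, a ≤ m ∧ a ≤ p ∧ b ≤ q ∧ b ≤ n ∧
      a + c ≤ m ∧ b + c ≤ n ∧ min (m + q) (min (n + p) (m + n)) = a + (b + c) :=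
    ⟨min m p, min q n, min (m - min m p) (n - min q n), by omega, by omega, by omega, by omega,
      by omega, by omega, by omega⟩
  let X : Matrix (Fin m) (Fin n) ℂ :=
    of fun i j => if a ≤ i.val ∧ b ≤ j.val ∧ i.val - a = j.val - b then 1 else 0
  let Y : Matrix (Fin m) (Fin p) ℂ := of fun i j => if i.val = j.val then 1 else 0
  let Z : Matrix (Fin q) (Fin n) ℂ := of fun i j => if i.val = j.val then 1 else 0
  refine ⟨X, Y, Z, le_antisymm (upper X Y Z) ?_⟩
  let f : Fin a ⊕ (Fin b ⊕ Fin c) → Fin m ⊕ Fin q :=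
    Sum.elim (fun t => .inl ⟨t, by omega⟩)
      (Sum.elim (fun t => .inr ⟨t, by omega⟩) (fun t => .inl ⟨a + t, by omega⟩))
  let g : Fin a ⊕ (Fin b ⊕ Fin c) → Fin n ⊕ Fin p :=
    Sum.elim (fun t => .inr ⟨t, by omega⟩)
      (Sum.elim (fun t => .inl ⟨t, by omega⟩) (fun t => .inl ⟨b + t, by omega⟩))
  have hone : (fromBlocks X Y Z (0 : Matrix (Fin q) (Fin p) ℂ)).submatrix f g = 1 := by
    ext i j
    rcases i with i | i | i <;> rcases j with j | j | j <;>
      simp [X, Y, Z, f, g, one_apply, Fin.ext_iff] <;> omega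
  have h := rank_submatrix_le (fromBlocks X Y Z (0 : Matrix (Fin q) (Fin p) ℂ)) f g
  rw [hone, rank_one] at h
  rw [hr]
  simpa using h
end

section
/- For every integer t with 0 ≤ t ≤ min{ m + q, n + p, m + n }, there exist matrices X ∈ ℂ^{m×n}, Y ∈ ℂ^{m×p}, Z ∈ ℂ^{q×n} such that the (m+q)×(n+p) block matrix [X, Y; Z, 0] has rank exactly t. -/
open Matrix

/-!
Take a partial permutation matrix with `t` ones at positions `(r k, c k)`, where `r` and `c` are
injective; its rank is `t`. List the rows in increasing order and the columns in decreasing order: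
`r k = k` and `c k = t - 1 - k`. A one would lie in the zero block only if `m ≤ k` and
`n ≤ t - 1 - k`, which would force `m + n < t`.
-/

/-- A partial permutation matrix has rank equal to its number of ones. It factors through `Fin t`,
and its submatrix on the selected rows and columns is the identity. -/
theorem rank_partialPerm {R C : Type*} [Fintype R] [Fintype C] [DecidableEq R] [DecidableEq C]
    {t : ℕ} (r : Fin t → R) (c : Fin t → C) (hr : r.Injective) (hc : c.Injective) :
    (((1 : Matrix R R ℂ).submatrix id r) * ((1 : Matrix C C ℂ).submatrix c id)).rank = t := by
  apply le_antisymm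
  · exact (rank_mul_le_left _ _).trans ((rank_le_card_width _).trans_eq (Fintype.card_fin t))
  · have h : (((1 : Matrix R R ℂ).submatrix id r) *
        ((1 : Matrix C C ℂ).submatrix c id)).submatrix r c = 1 := by
      rw [submatrix_mul _ _ r id c Function.bijective_id, submatrix_submatrix,
        submatrix_submatrix]
      simp [submatrix_one _ hr, submatrix_one _ hc]
    have h2 := rank_submatrix_le (((1 : Matrix R R ℂ).submatrix id r) *
        ((1 : Matrix C C ℂ).submatrix c id)) r c
    rw [h, rank_one, Fintype.card_fin] at h2
    exact h2

theorem stmt3 (m n p q t : ℕ) (ht : t ≤ min (m + q) (min (n + p) (m + n))) :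
    ∃ (X : Matrix (Fin m) (Fin n) ℂ) (Y : Matrix (Fin m) (Fin p) ℂ)
      (Z : Matrix (Fin q) (Fin n) ℂ),
      (fromBlocks X Y Z (0 : Matrix (Fin q) (Fin p) ℂ)).rank = t := by
  have h1 : t ≤ m + q := by omega
  have h2 : t ≤ n + p := by omega
  have h3 : t ≤ m + n := by omega
  let r : Fin t → Fin m ⊕ Fin q := fun k => finSumFinEquiv.symm (Fin.castLE h1 k)
  let c : Fin t → Fin n ⊕ Fin p := fun k => finSumFinEquiv.symm (Fin.castLE h2 k.rev)
  have hr : r.Injective := finSumFinEquiv.symm.injective.comp (Fin.castLE_injective h1)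
  have hc : c.Injective :=
    finSumFinEquiv.symm.injective.comp ((Fin.castLE_injective h2).comp Fin.rev_injective)
  have hM := rank_partialPerm r c hr hc
  set M := ((1 : Matrix (Fin m ⊕ Fin q) (Fin m ⊕ Fin q) ℂ).submatrix id r) *
    ((1 : Matrix (Fin n ⊕ Fin p) (Fin n ⊕ Fin p) ℂ).submatrix c id) with hMdef
  have h0 : M.toBlocks₂₂ = 0 := by
    ext i j
    simp only [toBlocks₂₂, of_apply, hMdef, mul_apply, submatrix_apply, id, Matrix.zero_apply, one_apply]
    refine Finset.sum_eq_zero fun k _ => ?_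
    by_cases hi : Sum.inr i = r k
    · by_cases hj : c k = Sum.inr j
      · exfalso
        have e1 := (Equiv.eq_symm_apply _).1 hi
        have e2 := (Equiv.symm_apply_eq _).1 hj
        have e1' := congrArg Fin.val e1
        have e2' := congrArg Fin.val e2
        simp [Fin.val_rev] at e1' e2'
        omega
      · simp [hj]
    · simp [hi]
  refine ⟨M.toBlocks₁₁, M.toBlocks₁₂, M.toBlocks₂₁, ?_⟩
  rw [← h0, fromBlocks_toBlocks, hM]
end

section
/- Let A ∈ ℂ^{m×n} be given and let Y ∈ ℂ^{m×p}, Z ∈ ℂ^{q×n}, U ∈ ℂ^{q×p} be variable matrices, and let φ(Y, Z, U) = [A, Y; Z, U] be the (m+q)×(n+p) block matrix. Then (1) the maximum of r(φ(Y, Z, U)) over all Y, Z, U equals min{ m + q, n + p, r(A) + p + q }, and (2) the minimum of r(φ(Y, Z, U)) over all Y, Z, U equals r(A); both extremal values are attained. -/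
/-!
Split the completed matrix as a row completion of the column completion `[A, Y]`. The rank of
`[M, Y]` is the dimension of the column space of `M` enlarged by the columns of `Y`, so adjoining
`p` columns raises the rank by at most `p`; and a subspace `V` of `E` can be enlarged by `p` vectors
to dimension `min (dim E) (dim V + p)` by picking each new vector outside the current
span while there is room (`exists_finrank_sup_span`). Hence the best column completion
of `A` has rank `min m (r(A) + p)` (`exists_rank_fromCols`), and by transposition the best row
completion of that has rank `min (n + p) (min m (r(A) + p) + q)`, which equals the stated minimum.
The minimal rank is bounded below by the submatrix `A` and is attained by zero blocks.
-/

open Matrix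

open Module in
/-- A subspace can be enlarged by `p` vectors as far as the ambient dimension allows. -/
lemma exists_finrank_sup_span {E : Type*} [AddCommGroup E] [Module ℂ E] [FiniteDimensional ℂ E]
    (p : ℕ) (V : Submodule ℂ E) :
    ∃ f : Fin p → E, finrank ℂ ↥(V ⊔ Submodule.span ℂ (Set.range f)) =
      min (finrank ℂ E) (finrank ℂ V + p) := by
  induction p generalizing V with
  | zero =>
    refine ⟨Fin.elim0, ?_⟩
    have := V.finrank_le
    rw [Set.range_eq_empty, Submodule.span_empty, sup_bot_eq, add_zero, min_eq_right this]
  | succ p ih =>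
    by_cases hV : V = ⊤
    · subst hV
      exact ⟨0, by rw [top_sup_eq]; simp⟩
    · obtain ⟨c, hc⟩ : ∃ c, c ∉ V := by
        by_contra! h
        exact hV (Submodule.eq_top_iff'.2 h)
      obtain ⟨f, hf⟩ := ih (V ⊔ Submodule.span ℂ {c})
      refine ⟨Fin.cons c f, ?_⟩
      have h1 : finrank ℂ ↥(V ⊔ Submodule.span ℂ {c}) = finrank ℂ V + 1 := by
        have hc0 : c ≠ 0 := by
          rintro rfl
          exact hc V.zero_mem
        have hd : V ⊓ Submodule.span ℂ {c} = ⊥ :=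
          ((Submodule.disjoint_span_singleton' hc0).2 hc).eq_bot
        have h := Submodule.finrank_sup_add_finrank_inf_eq V (Submodule.span ℂ {c})
        rw [hd, finrank_bot, finrank_span_singleton hc0] at h
        exact h
      rw [Fin.range_cons, Submodule.span_insert, ← sup_assoc, hf, h1, add_assoc, add_comm 1 p]

lemma rank_fromCols {a b c : Type*} [Fintype a] [Fintype b] [Fintype c]
    (M : Matrix a b ℂ) (Y : Matrix a c ℂ) :
    (fromCols M Y).rank = Module.finrank ℂ
      ↥(Submodule.span ℂ (Set.range M.col) ⊔ Submodule.span ℂ (Set.range Y.col)) := by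
  rw [rank_eq_finrank_span_cols, ← Submodule.span_union]
  have : (fromCols M Y).col = Sum.elim M.col Y.col := by
    ext (i | i) j <;> rfl
  rw [this, Set.Sum.elim_range]

lemma rank_fromCols_le {a b : Type*} [Fintype a] [Fintype b] {p : ℕ}
    (M : Matrix a b ℂ) (Y : Matrix a (Fin p) ℂ) :
    (fromCols M Y).rank ≤ M.rank + p := by
  rw [rank_fromCols]
  refine (Submodule.finrank_add_le_finrank_add_finrank _ _).trans ?_
  rw [← rank_eq_finrank_span_cols, ← rank_eq_finrank_span_cols]
  exact Nat.add_le_add_left (by simpa using Y.rank_le_card_width) _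

lemma rank_fromRows_eq {a b c : Type*} [Fintype a] [Fintype b] [Fintype c]
    (M : Matrix b a ℂ) (Z : Matrix c a ℂ) :
    (fromRows M Z).rank = (fromCols Mᵀ Zᵀ).rank := by
  rw [← rank_transpose, transpose_fromRows]

lemma rank_fromRows_le {a b : Type*} [Fintype a] [Fintype b] {q : ℕ}
    (M : Matrix b a ℂ) (Z : Matrix (Fin q) a ℂ) :
    (fromRows M Z).rank ≤ M.rank + q := by
  rw [rank_fromRows_eq, ← M.rank_transpose]
  exact rank_fromCols_le _ _

lemma exists_rank_fromCols {a b : Type*} [Fintype a] [Fintype b] (p : ℕ) (M : Matrix a b ℂ) :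
    ∃ Y : Matrix a (Fin p) ℂ, (fromCols M Y).rank = min (Fintype.card a) (M.rank + p) := by
  obtain ⟨f, hf⟩ := exists_finrank_sup_span p (Submodule.span ℂ (Set.range M.col))
  refine ⟨(of f)ᵀ, ?_⟩
  rw [rank_fromCols, rank_eq_finrank_span_cols]
  rw [Module.finrank_fintype_fun_eq_card] at hf
  exact hf

lemma exists_rank_fromRows {a b : Type*} [Fintype a] [Fintype b] (q : ℕ) (M : Matrix b a ℂ) :
    ∃ Z : Matrix (Fin q) a ℂ, (fromRows M Z).rank = min (Fintype.card a) (M.rank + q) := by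
  obtain ⟨Y, hY⟩ := exists_rank_fromCols q Mᵀ
  refine ⟨Yᵀ, ?_⟩
  rw [rank_fromRows_eq, transpose_transpose, hY, rank_transpose]



theorem stmt4 (m n p q : ℕ) (A : Matrix (Fin m) (Fin n) ℂ) :
    (∀ (Y : Matrix (Fin m) (Fin p) ℂ) (Z : Matrix (Fin q) (Fin n) ℂ)
        (U : Matrix (Fin q) (Fin p) ℂ),
      (fromBlocks A Y Z U).rank ≤ min (m + q) (min (n + p) (A.rank + p + q))) ∧
    (∃ (Y : Matrix (Fin m) (Fin p) ℂ) (Z : Matrix (Fin q) (Fin n) ℂ)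
        (U : Matrix (Fin q) (Fin p) ℂ),
      (fromBlocks A Y Z U).rank = min (m + q) (min (n + p) (A.rank + p + q))) ∧
    (∀ (Y : Matrix (Fin m) (Fin p) ℂ) (Z : Matrix (Fin q) (Fin n) ℂ)
        (U : Matrix (Fin q) (Fin p) ℂ),
      A.rank ≤ (fromBlocks A Y Z U).rank) ∧
    (∃ (Y : Matrix (Fin m) (Fin p) ℂ) (Z : Matrix (Fin q) (Fin n) ℂ)
        (U : Matrix (Fin q) (Fin p) ℂ),
      (fromBlocks A Y Z U).rank = A.rank) := by
  refine ⟨fun Y Z U => ?_, ?_, fun Y Z U => ?_, 0, 0, 0, ?_⟩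
  · refine le_min ?_ (le_min ?_ ?_)
    · simpa using (fromBlocks A Y Z U).rank_le_card_height
    · simpa using (fromBlocks A Y Z U).rank_le_card_width
    · rw [← fromRows_fromCols_eq_fromBlocks]
      exact (rank_fromRows_le _ _).trans (Nat.add_le_add_right (rank_fromCols_le _ _) _)
  · obtain ⟨Y, hY⟩ := exists_rank_fromCols p A
    obtain ⟨W, hW⟩ := exists_rank_fromRows q (fromCols A Y)
    refine ⟨Y, W.toCols₁, W.toCols₂, ?_⟩
    rw [← fromRows_fromCols_eq_fromBlocks, fromCols_toCols, hW, hY]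
    simp only [Fintype.card_sum, Fintype.card_fin]
    omega
  · exact (fromBlocks A Y Z U).rank_submatrix_le Sum.inl Sum.inl
  · have hcol {a b c : Type} [Fintype a] [Fintype b] [Fintype c] (M : Matrix a b ℂ) :
        (fromCols M (0 : Matrix a c ℂ)).rank = M.rank := by
      have h0 : Submodule.span ℂ (Set.range (0 : Matrix a c ℂ).col) = ⊥ := by
        rw [Submodule.span_eq_bot]
        rintro _ ⟨i, rfl⟩
        rfl
      rw [rank_fromCols, h0, sup_bot_eq, rank_eq_finrank_span_cols]
    rw [← fromRows_fromCols_eq_fromBlocks, fromCols_zero, rank_fromRows_eq, transpose_zero,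
      hcol, rank_transpose, hcol]
end

section
/- Let A ∈ ℂ^{m×n} be given. For every integer t with r(A) ≤ t ≤ min{ m + q, n + p, r(A) + p + q }, there exist matrices Y ∈ ℂ^{m×p}, Z ∈ ℂ^{q×n}, U ∈ ℂ^{q×p} such that the (m+q)×(n+p) block matrix [A, Y; Z, U] has rank exactly t. -/
open Matrix

/-!
The block matrix is built in two stages: first the columns `Y` are adjoined to `A`, then the rows
`[Z, U]` are adjoined to `[A, Y]`. Adjoining `p` columns to a matrix with `m` rows and rank `r` can
produce every rank `s` with `r ≤ s ≤ min m (r + p)`: take `s - r` linearly independent columns in a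
complement of the column space, and make the other columns zero (`exists_fromCols_rank_eq`).
By transposition the same holds for rows. The intermediate rank `min t (min m (r + p))` is reachable
from `r`, and the bounds on `t` say exactly that `t` is reachable from it.
-/

lemma exists_fromCols_rank_eq {ι κ : Type*} [Fintype ι] [Fintype κ] (p s : ℕ)
    (A : Matrix ι κ ℂ) (h1 : A.rank ≤ s) (h2 : s ≤ Fintype.card ι) (h3 : s ≤ A.rank + p) :
    ∃ Y : Matrix ι (Fin p) ℂ, (fromCols A Y).rank = s := by
  obtain ⟨V, hV⟩ := Submodule.exists_isCompl (Submodule.span ℂ (Set.range A.col))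
  have hdim := Submodule.finrank_add_eq_of_isCompl hV
  rw [← rank_eq_finrank_span_cols, Module.finrank_fintype_fun_eq_card] at hdim
  let b := Module.finBasis ℂ V
  have hd : s - A.rank ≤ Module.finrank ℂ V := by omega
  let c : Fin (s - A.rank) → (ι → ℂ) := fun j => (b (Fin.castLE hd j) : ι → ℂ)
  have hc : LinearIndependent ℂ c :=
    (b.linearIndependent.map' V.subtype V.ker_subtype).comp _ (Fin.castLE_injective hd)
  let Y : Matrix ι (Fin p) ℂ :=
    Matrix.of fun i j => if h : (j : ℕ) < s - A.rank then c ⟨j, h⟩ i else 0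
  have hY : Submodule.span ℂ (Set.range Y.col) = Submodule.span ℂ (Set.range c) := by
    apply le_antisymm <;> rw [Submodule.span_le]
    · rintro _ ⟨j, rfl⟩
      by_cases h : (j : ℕ) < s - A.rank
      · have : Y.col j = c ⟨j, h⟩ := by ext i; simp [Y, h]
        rw [this]
        exact Submodule.subset_span ⟨_, rfl⟩
      · have : Y.col j = 0 := by ext i; simp [Y, h]
        rw [this]
        exact Submodule.zero_mem _
    · rintro _ ⟨j, rfl⟩
      refine Submodule.subset_span ⟨⟨j, by omega⟩, ?_⟩
      ext i
      simp [Y]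
  have hcV : Submodule.span ℂ (Set.range c) ≤ V := by
    rw [Submodule.span_le]
    rintro _ ⟨j, rfl⟩
    exact (b (Fin.castLE hd j)).2
  refine ⟨Y, ?_⟩
  have hcols : Set.range (fromCols A Y).col = Set.range A.col ∪ Set.range Y.col := by
    rw [← Set.Sum.elim_range]
    congr 1
    ext (j | j) i <;> rfl
  have hinf := (hV.disjoint.mono_right hcV).eq_bot
  have hsum := Submodule.finrank_sup_add_finrank_inf_eq
    (Submodule.span ℂ (Set.range A.col)) (Submodule.span ℂ (Set.range c))
  rw [hinf, finrank_bot, finrank_span_eq_card hc, Fintype.card_fin,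
    ← rank_eq_finrank_span_cols] at hsum
  rw [rank_eq_finrank_span_cols, hcols, Submodule.span_union, hY]
  omega

theorem stmt5 (m n p q t : ℕ) (A : Matrix (Fin m) (Fin n) ℂ)
    (ht1 : A.rank ≤ t) (ht2 : t ≤ min (m + q) (min (n + p) (A.rank + p + q))) :
    ∃ (Y : Matrix (Fin m) (Fin p) ℂ) (Z : Matrix (Fin q) (Fin n) ℂ)
      (U : Matrix (Fin q) (Fin p) ℂ),
      (fromBlocks A Y Z U).rank = t := by
  have hm : A.rank ≤ m := A.rank_le_height
  obtain ⟨Y, hY⟩ := exists_fromCols_rank_eq p (min t (min m (A.rank + p))) A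
    (by omega) (by simp) (by omega)
  obtain ⟨X, hX⟩ := exists_fromCols_rank_eq q t (fromCols A Y)ᵀ
    (by rw [rank_transpose]; omega) (by simp; omega) (by rw [rank_transpose]; omega)
  refine ⟨Y, Xᵀ.toCols₁, Xᵀ.toCols₂, ?_⟩
  rw [← hX, ← rank_transpose]
  congr 1
  ext (i | i) (j | j) <;> rfl
end

section
/- Let A ∈ ℂ^{m×n} be given and let t be an integer with 0 ≤ t ≤ min{m, n}. Then the maximum of r(A + X) over all X ∈ ℂ^{m×n} with r(X) = t equals min{ m, n, r(A) + t }; that is, r(A + X) ≤ min{ m, n, r(A) + t } for every X with r(X) = t, and there exists such an X attaining this value. -/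
open Matrix

/-!
The upper bound is subadditivity of the rank, together with the trivial bound by the size of the
matrix. For attainment, put `A` in rank normal form: there are bases `v` of `ℂⁿ` and `w` of `ℂᵐ`
such that `A vⱼ = wⱼ` for `j < r := r(A)` and `A vⱼ = 0` otherwise
(`exists_bases_normal_form`). With `k = min m n` and `s = min r (k - t)`, let `X vⱼ = wⱼ` for
`s ≤ j < s + t` and `X vⱼ = 0` otherwise. All of `A`, `X`, `A + X` are diagonal in these bases, so
their ranks count nonzero diagonal entries (`finrank_range_of_diagonal`). The diagonal entries of
`A` and `X` are `0` or `1`, so they cannot cancel (the characteristic is not two), and those of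
`A + X` are nonzero exactly on `[0, r) ∪ [s, s + t) = [0, min k (r + t))`.
-/

theorem matrix_rank_add_le {m n : ℕ} (A B : Matrix (Fin m) (Fin n) ℂ) :
    (A + B).rank ≤ A.rank + B.rank := by
  unfold Matrix.rank
  rw [Matrix.mulVecLin_add]
  refine le_trans (Submodule.finrank_mono ?_)
    (Submodule.finrank_add_le_finrank_add_finrank _ _)
  rintro _ ⟨x, rfl⟩
  exact Submodule.add_mem_sup ⟨x, rfl⟩ ⟨x, rfl⟩

/-- Rank normal form of a linear map, expressed by a pair of adapted bases: a basis of the range is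
lifted to a complement of the kernel, and the two families are completed by a basis of the kernel
and a basis of a complement of the range. The second conjunct covers the indices `j` for which there
is no `w j`. -/
theorem exists_bases_normal_form {m n : ℕ} (f : (Fin n → ℂ) →ₗ[ℂ] (Fin m → ℂ)) :
    ∃ (v : Module.Basis (Fin n) ℂ (Fin n → ℂ)) (w : Module.Basis (Fin m) ℂ (Fin m → ℂ)),
      (∀ (j : ℕ) (hn : j < n) (hm : j < m),
        f (v ⟨j, hn⟩) = if j < Module.finrank ℂ (LinearMap.range f) then w ⟨j, hm⟩ else 0) ∧
      (∀ j : Fin n, m ≤ j → f (v j) = 0) := by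
  obtain ⟨C, hC⟩ := Submodule.exists_isCompl (LinearMap.ker f)
  obtain ⟨D, hD⟩ := Submodule.exists_isCompl (LinearMap.range f)
  set r := Module.finrank ℂ (LinearMap.range f) with hr
  have hk : r + Module.finrank ℂ (LinearMap.ker f) = n := by
    simpa using f.finrank_range_add_finrank_ker
  have hd : r + Module.finrank ℂ D = m := by
    simpa using Submodule.finrank_add_eq_of_isCompl hD
  let e := LinearMap.kerComplementEquivRange f hC.symm
  let b := Module.finBasis ℂ (LinearMap.range f)
  let v₀ := ((b.map e.symm).prod (Module.finBasis ℂ (LinearMap.ker f))).map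
    (Submodule.prodEquivOfIsCompl _ _ hC.symm)
  let w₀ := (b.prod (Module.finBasis ℂ D)).map (Submodule.prodEquivOfIsCompl _ _ hD)
  have hv1 : ∀ i, f (v₀ (Sum.inl i)) = b i := by
    intro i
    have h : (e (e.symm (b i)) : Fin m → ℂ) = b i := by rw [e.apply_symm_apply]
    have h' : v₀ (Sum.inl i) = (e.symm (b i) : Fin n → ℂ) := by simp [v₀]
    rw [h', ← h]
    rfl
  have hv2 : ∀ i, f (v₀ (Sum.inr i)) = 0 := by
    intro i
    simp [v₀]
  have hw1 : ∀ i, w₀ (Sum.inl i) = b i := by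
    intro i
    simp [w₀]
  let en := finSumFinEquiv.trans (finCongr hk)
  let em := finSumFinEquiv.trans (finCongr hd)
  have hlt : ∀ (j : ℕ) (hn : j < n) (h : j < r), en.symm ⟨j, hn⟩ = Sum.inl ⟨j, h⟩ := by
    intro j hn h
    rw [Equiv.symm_apply_eq]
    ext
    simp [en]
  have hge : ∀ (j : ℕ) (hn : j < n) (h : ¬ j < r), ∃ i, en.symm ⟨j, hn⟩ = Sum.inr i := by
    intro j hn h
    refine ⟨⟨j - r, by omega⟩, ?_⟩
    rw [Equiv.symm_apply_eq]
    ext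
    simp [en]
    omega
  have hlt' : ∀ (j : ℕ) (hm : j < m) (h : j < r), em.symm ⟨j, hm⟩ = Sum.inl ⟨j, h⟩ := by
    intro j hm h
    rw [Equiv.symm_apply_eq]
    ext
    simp [em]
  refine ⟨v₀.reindex en, w₀.reindex em, ?_, ?_⟩
  · intro j hn hm
    rw [Module.Basis.reindex_apply, Module.Basis.reindex_apply]
    split_ifs with h
    · rw [hlt j hn h, hlt' j hm h, hv1, hw1]
    · obtain ⟨i, hi⟩ := hge j hn h
      rw [hi, hv2]
  · rintro ⟨j, hn⟩ hj
    obtain ⟨i, hi⟩ := hge j hn (by simp at hj; omega)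
    rw [Module.Basis.reindex_apply, hi, hv2]

/-- The rank of a (possibly rectangular) linear map that is diagonal with respect to two bases is
the number of nonzero diagonal entries; here the nonzero entries are those at positions in `S`. -/
theorem finrank_range_of_diagonal {m n : ℕ} (g : (Fin n → ℂ) →ₗ[ℂ] (Fin m → ℂ))
    (v : Module.Basis (Fin n) ℂ (Fin n → ℂ)) (w : Module.Basis (Fin m) ℂ (Fin m → ℂ))
    (S : Finset ℕ) (hS : ∀ j ∈ S, j < n ∧ j < m) (c : ℕ → ℂ) (hc : ∀ j, c j ≠ 0 ↔ j ∈ S)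
    (h1 : ∀ (j : ℕ) (hn : j < n) (hm : j < m), g (v ⟨j, hn⟩) = c j • w ⟨j, hm⟩)
    (h2 : ∀ j : Fin n, m ≤ j → g (v j) = 0) :
    Module.finrank ℂ (LinearMap.range g) = S.card := by
  let u : S → (Fin m → ℂ) := fun j => w ⟨j, (hS j j.2).2⟩
  have hu : LinearIndependent ℂ u :=
    w.linearIndependent.comp (fun j : S => (⟨j, (hS j j.2).2⟩ : Fin m))
      (fun a b hab => Subtype.ext (by simpa using hab))
  have hrange : LinearMap.range g = Submodule.span ℂ (Set.range u) := by
    rw [LinearMap.range_eq_map, ← v.span_eq, Submodule.map_span]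
    apply le_antisymm
    · rw [Submodule.span_le]
      rintro _ ⟨_, ⟨⟨j, hj⟩, rfl⟩, rfl⟩
      by_cases hm : j < m
      · rw [h1 j hj hm]
        by_cases hjS : j ∈ S
        · exact Submodule.smul_mem _ _ (Submodule.subset_span ⟨⟨j, hjS⟩, rfl⟩)
        · rw [not_not.1 (mt (hc j).1 hjS), zero_smul]
          exact Submodule.zero_mem _
      · rw [h2 ⟨j, hj⟩ (not_lt.1 hm)]
        exact Submodule.zero_mem _
    · rw [Submodule.span_le]
      rintro _ ⟨⟨j, hj⟩, rfl⟩
      have hcj := (hc j).2 hj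
      have : u ⟨j, hj⟩ = (c j)⁻¹ • g (v ⟨j, (hS j hj).1⟩) := by
        rw [h1 j (hS j hj).1 (hS j hj).2, smul_smul, inv_mul_cancel₀ hcj, one_smul]
      rw [this]
      exact Submodule.smul_mem _ _ (Submodule.subset_span ⟨_, ⟨_, rfl⟩, rfl⟩)
  rw [hrange, finrank_span_eq_card hu, Fintype.card_coe]

theorem stmt6 (m n t : ℕ) (ht : t ≤ min m n) (A : Matrix (Fin m) (Fin n) ℂ) :
    (∀ X : Matrix (Fin m) (Fin n) ℂ, X.rank = t →
      (A + X).rank ≤ min (min m n) (A.rank + t)) ∧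
    (∃ X : Matrix (Fin m) (Fin n) ℂ, X.rank = t ∧
      (A + X).rank = min (min m n) (A.rank + t)) := by
  constructor
  · rintro X rfl
    exact le_min (le_min (Matrix.rank_le_height _) (Matrix.rank_le_width _))
      (matrix_rank_add_le A X)
  · have hrm : A.rank ≤ m := Matrix.rank_le_height A
    have hrn : A.rank ≤ n := Matrix.rank_le_width A
    obtain ⟨v, w, h1, h2⟩ := exists_bases_normal_form A.mulVecLin
    change ∀ (j : ℕ) (hn : j < n) (hm : j < m),
        A.mulVecLin (v ⟨j, hn⟩) = if j < A.rank then w ⟨j, hm⟩ else 0 at h1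
    obtain ⟨s, hs⟩ : ∃ s, s = min A.rank (min m n - t) := ⟨_, rfl⟩
    let c : ℕ → ℂ := fun j => if s ≤ j ∧ j < s + t then 1 else 0
    let g : (Fin n → ℂ) →ₗ[ℂ] (Fin m → ℂ) :=
      v.constr ℂ fun j => if h : (j : ℕ) < m then c j • w ⟨j, h⟩ else 0
    have hg1 : ∀ (j : ℕ) (hn : j < n) (hm : j < m), g (v ⟨j, hn⟩) = c j • w ⟨j, hm⟩ := by
      intro j hn hm
      rw [Module.Basis.constr_basis, dif_pos hm]
    have hg2 : ∀ j : Fin n, m ≤ j → g (v j) = 0 := by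
      intro j hj
      rw [Module.Basis.constr_basis, dif_neg (not_lt.2 hj)]
    have hX : (LinearMap.toMatrix' g).mulVecLin = g := by
      rw [← Matrix.toLin'_apply', Matrix.toLin'_toMatrix']
    refine ⟨LinearMap.toMatrix' g, ?_, ?_⟩
    · rw [Matrix.rank, hX, finrank_range_of_diagonal g v w (Finset.Ico s (s + t)) ?_ c ?_ hg1 hg2]
      · simp
      · intro j hj
        rw [Finset.mem_Ico] at hj
        omega
      · intro j
        simp [c]
    · rw [Matrix.rank, Matrix.mulVecLin_add, hX,
        finrank_range_of_diagonal (A.mulVecLin + g) v w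
          (Finset.range (min (min m n) (A.rank + t))) ?_
          (fun j => (if j < A.rank then 1 else 0) + c j) ?_ ?_ ?_]
      · simp
      · intro j hj
        rw [Finset.mem_range] at hj
        omega
      · intro j
        rw [Finset.mem_range]
        by_cases ha : j < A.rank <;> by_cases hb : s ≤ j ∧ j < s + t <;>
          simp only [c, ha, hb, if_true, if_false] <;> norm_num <;> omega
      · intro j hn hm
        rw [LinearMap.add_apply, h1 j hn hm, hg1 j hn hm, add_smul]
        split_ifs <;> simp
      · intro j hj
        rw [LinearMap.add_apply, h2 j hj, hg2 j hj, add_zero]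
end

section
/- Let A ∈ ℂ^{m×n}, B ∈ ℂ^{m×p}, C ∈ ℂ^{q×n} be given with the column space of A contained in the column space of B and the column space of A* contained in the column space of C*, and let t be an integer with 0 ≤ t ≤ min{p, q}. Then (1) the maximum of r(A + BXC) over all X ∈ ℂ^{p×q} with r(X) = t equals min{ r(B), r(C), r(A) + t }, and (2) the minimum of r(A + BXC) over all X ∈ ℂ^{p×q} with r(X) = t equals max{ 0, r(B) + r(C) − r(A) + t − p − q, r(A) − t }; both extremal values are attained. -/
/-!
Write `a`, `b`, `c` for the ranks of `A`, `B`, `C`. The range hypotheses say that `A = B * M` and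
`A = N * C` for some `M` and `N`.

**Bounds.** The upper bound holds because `A + B * X * C` factors through both `B` and `C`, and
because rank is subadditive. The lower bound follows from subadditivity, applied to
`A = (A + B * X * C) - B * X * C` and to `B * X * C = (A + B * X * C) - A`, together with Sylvester's
inequality `r(B) + r(X) ≤ r(B * X) + p`, used once for `B * X` and once for `(B * X) * C`.

**Attainment.** A basis of the range of `A` extends to a basis of the range of `B`, and similarly for
the row spaces of `A` and `C`. This brings the three matrices to normal form simultaneously
(`exists_normal_form_left`, `exists_same_rank_and_rank_eq`): after an invertible substitution
`X ↔ Y`, the rank of `A + B * X * C` is the rank of `I_a + Y₁`, where `I_a` is the `b × c` partial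
identity of rank `a` and `Y₁` is the leading `b × c` block of `Y`. Take `Y₁` to be a diagonal block
with `s` equal nonzero entries. By `exists_fill` such a block is the leading block of some `p × q`
matrix of rank `t` as soon as `t - (p - b) - (q - c) ≤ s ≤ t ≤ min p q`.

* Maximum: `s = min t b c`, with ones placed so that the support of the block ends at position
  `min b c (a + s) = min b c (a + t)`. The sum is diagonal, with entries `1` or `2` there.
* Minimum: `s` is the point nearest to `a` in the range of admissible values, with entries `-1`
  starting at position `0`. The sum is diagonal with `|a - s|` nonzero entries.
-/

open Matrix

/-! ### Rank inequalities and factorizations -/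

/-- Sylvester's rank inequality. -/
theorem sylvester {k p q : ℕ} (B : Matrix (Fin k) (Fin p) ℂ) (X : Matrix (Fin p) (Fin q) ℂ) :
    B.rank + X.rank ≤ (B * X).rank + p := by
  have h1 := (B.mulVecLin.domRestrict (LinearMap.range X.mulVecLin)).finrank_range_add_finrank_ker
  have h2 := B.mulVecLin.finrank_range_add_finrank_ker
  have h3 : LinearMap.range (B.mulVecLin.domRestrict (LinearMap.range X.mulVecLin))
      = LinearMap.range (B * X).mulVecLin := by
    rw [LinearMap.range_domRestrict, Matrix.mulVecLin_mul, LinearMap.range_comp]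
  have h4 : Module.finrank ℂ (LinearMap.ker (B.mulVecLin.domRestrict (LinearMap.range X.mulVecLin)))
      ≤ Module.finrank ℂ (LinearMap.ker B.mulVecLin) := by
    rw [LinearMap.ker_domRestrict, ← Submodule.finrank_map_subtype_eq]
    exact Submodule.finrank_mono (Submodule.map_comap_le _ _)
  rw [h3] at h1
  rw [Module.finrank_fin_fun] at h2
  unfold Matrix.rank
  omega

theorem rank_add_le' {k p : ℕ} (A B : Matrix (Fin k) (Fin p) ℂ) :
    (A + B).rank ≤ A.rank + B.rank := by
  unfold Matrix.rank
  rw [Matrix.mulVecLin_add]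
  refine (Submodule.finrank_mono (LinearMap.range_add_le _ _)).trans ?_
  exact Submodule.finrank_add_le_finrank_add_finrank _ _

theorem rank_mul_of_leftInv {m n a : ℕ} (U : Matrix (Fin m) (Fin a) ℂ) (U' : Matrix (Fin a) (Fin m) ℂ)
    (M : Matrix (Fin a) (Fin n) ℂ) (h : U' * U = 1) : (U * M).rank = M.rank := by
  apply le_antisymm (Matrix.rank_mul_le_right _ _)
  calc M.rank = (U' * (U * M)).rank := by rw [← Matrix.mul_assoc, h, Matrix.one_mul]
    _ ≤ _ := Matrix.rank_mul_le_right _ _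

theorem rank_mul_of_rightInv {m n a : ℕ} (V : Matrix (Fin a) (Fin n) ℂ) (V' : Matrix (Fin n) (Fin a) ℂ)
    (M : Matrix (Fin m) (Fin a) ℂ) (h : V * V' = 1) : (M * V).rank = M.rank := by
  apply le_antisymm (Matrix.rank_mul_le_left _ _)
  calc M.rank = (M * V * V').rank := by rw [Matrix.mul_assoc, h, Matrix.mul_one]
    _ ≤ _ := Matrix.rank_mul_le_left _ _

theorem rank_neg' {k p : ℕ} (A : Matrix (Fin k) (Fin p) ℂ) : (-A).rank = A.rank := by
  have h : (-1 : Matrix (Fin k) (Fin k) ℂ) * -1 = 1 := by simp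
  simpa using rank_mul_of_leftInv _ _ A h

theorem exists_mul_of_range_le {m n p : ℕ} (A : Matrix (Fin m) (Fin n) ℂ) (B : Matrix (Fin m) (Fin p) ℂ)
    (h : LinearMap.range A.mulVecLin ≤ LinearMap.range B.mulVecLin):
    ∃ Z : Matrix (Fin p) (Fin n) ℂ, A = B * Z := by
  choose z hz using fun j => h ⟨Pi.single j 1, rfl⟩
  refine ⟨Matrix.of fun i j => z j i, ?_⟩
  ext i j
  have := congrFun (hz j) i
  simp only [Matrix.mulVecLin_apply, Matrix.mulVec_single_one] at this
  exact this.symm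

/-- Full rank factorization: `U` has independent columns and `V` has independent rows, expressed by
one-sided inverses. -/
theorem rank_factorization {m n r : ℕ} (A : Matrix (Fin m) (Fin n) ℂ)
    (hr : A.rank = r) :
    ∃ (U : Matrix (Fin m) (Fin r) ℂ) (U' : Matrix (Fin r) (Fin m) ℂ)
      (V : Matrix (Fin r) (Fin n) ℂ) (V' : Matrix (Fin n) (Fin r) ℂ),
      A = U * V ∧ U' * U = 1 ∧ V * V' = 1 := by
  let R := LinearMap.range A.mulVecLin
  let b : Module.Basis (Fin r) ℂ R := Module.finBasisOfFinrankEq ℂ R hr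
  have hU : LinearMap.ker (R.subtype ∘ₗ b.equivFun.symm.toLinearMap) = ⊥ :=
    LinearMap.ker_eq_bot.2 (R.injective_subtype.comp b.equivFun.symm.injective)
  obtain ⟨l, hl⟩ := LinearMap.exists_leftInverse_of_injective _ hU
  have hV : LinearMap.range (b.equivFun.toLinearMap ∘ₗ A.mulVecLin.rangeRestrict) = ⊤ :=
    LinearMap.range_eq_top.2 (b.equivFun.surjective.comp A.mulVecLin.surjective_rangeRestrict)
  obtain ⟨g, hg⟩ := LinearMap.exists_rightInverse_of_surjective _ hV
  refine ⟨LinearMap.toMatrix' (R.subtype ∘ₗ b.equivFun.symm.toLinearMap), LinearMap.toMatrix' l,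
    LinearMap.toMatrix' (b.equivFun.toLinearMap ∘ₗ A.mulVecLin.rangeRestrict),
    LinearMap.toMatrix' g, ?_, ?_, ?_⟩
  · rw [← LinearMap.toMatrix'_comp]
    apply Matrix.toLin'.injective
    ext1 x
    ext
    simp [R]
  · rw [← LinearMap.toMatrix'_comp, hl, LinearMap.toMatrix'_id]
  · rw [← LinearMap.toMatrix'_comp, hg, LinearMap.toMatrix'_id]

/-! ### Simultaneous bases -/

/-- The `0/1` matrix whose `k`-th column is the standard basis vector at `e k`. For injective `e` it
is the inclusion of the coordinate subspace spanned by the range of `e`, and its transpose is a left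
inverse. -/
def incl {k N : ℕ} (e : Fin k → Fin N) : Matrix (Fin N) (Fin k) ℂ :=
  (1 : Matrix (Fin N) (Fin N) ℂ).submatrix id e

theorem incl_transpose_mul {k N : ℕ} (e : Fin k → Fin N) (he : Function.Injective e) :
    (incl e)ᵀ * incl e = 1 := by
  ext i j
  simp [incl, Matrix.mul_apply, Matrix.one_apply, he.eq_iff]
  
theorem mul_incl {k N M : ℕ} (e : Fin k → Fin N) (P : Matrix (Fin M) (Fin N) ℂ) :
    P * incl e = P.submatrix id e := by
  ext i j
  simp [incl, Matrix.mul_apply, Matrix.one_apply]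

/-- A matrix with a left inverse consists of the leading columns of an invertible matrix. -/
theorem extend_to_invertible {k N : ℕ} (hk : k ≤ N) (L : Matrix (Fin N) (Fin k) ℂ)
    (L' : Matrix (Fin k) (Fin N) ℂ) (h : L' * L = 1) :
    ∃ P P' : Matrix (Fin N) (Fin N) ℂ, P * P' = 1 ∧ P' * P = 1 ∧ P * incl (Fin.castLE hk) = L := by
  have hli : LinearIndependent ℂ L.col := by
    rw [← Matrix.mulVec_injective_iff]
    intro x y hxy
    have := congrArg (L' *ᵥ ·) hxy
    simpa [Matrix.mulVec_mulVec, h] using this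
  let b := Module.Basis.sumExtend hli
  have : Finite (Fin k ⊕ Module.Basis.sumExtendIndex hli) := Module.Finite.finite_basis b
  have : Finite (Module.Basis.sumExtendIndex hli) := Finite.sum_right (Fin k)
  have := Fintype.ofFinite (Module.Basis.sumExtendIndex hli)
  have hcard : Fintype.card (Module.Basis.sumExtendIndex hli) = N - k := by
    have := Module.finrank_eq_card_basis b
    simp only [Module.finrank_fin_fun, Fintype.card_sum, Fintype.card_fin] at this
    omega
  let e : Fin k ⊕ Module.Basis.sumExtendIndex hli ≃ Fin N :=
    (Equiv.sumCongr (Equiv.refl _) (Fintype.equivFinOfCardEq hcard)).trans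
      (finSumFinEquiv.trans (finCongr (by omega)))
  let w := b.reindex e
  refine ⟨(Pi.basisFun ℂ (Fin N)).toMatrix w, w.toMatrix (Pi.basisFun ℂ (Fin N)),
    Module.Basis.toMatrix_mul_toMatrix_flip _ _, Module.Basis.toMatrix_mul_toMatrix_flip _ _, ?_⟩
  rw [mul_incl]
  ext i j
  have he : e.symm (Fin.castLE hk j) = Sum.inl j := by
    rw [Equiv.symm_apply_eq]
    ext
    simp [e]
  have hb : b (Sum.inl j) = L.col j := by
    simp only [b, Module.Basis.sumExtend, Module.Basis.reindex_apply, Module.Basis.extend_apply_self]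
    simp
    rfl
  simp [Module.Basis.toMatrix_apply, w, he, hb]

/-- Normal form of `B` under column operations, relative to a full column rank matrix `F` whose columns
lie in the range of `B`: the columns of `U` form a basis of the range of `B` starting with the columns
of `F`, and in the coordinates given by `P` the matrix `B` sends the first `b` basis vectors to the
columns of `U` and kills the others. -/
theorem exists_normal_form_left {m p a b : ℕ} (B : Matrix (Fin m) (Fin p) ℂ) (hr : B.rank = b) (hb : b ≤ p)
    (F : Matrix (Fin m) (Fin a) ℂ) (F' : Matrix (Fin a) (Fin m) ℂ) (hF : F' * F = 1)
    (Z : Matrix (Fin p) (Fin a) ℂ) (hZ : F = B * Z) (ha : a ≤ b) :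
    ∃ (U : Matrix (Fin m) (Fin b) ℂ) (U' : Matrix (Fin b) (Fin m) ℂ)
      (P P' : Matrix (Fin p) (Fin p) ℂ), U' * U = 1 ∧ P * P' = 1 ∧ P' * P = 1 ∧
      B * P = U * (incl (Fin.castLE hb))ᵀ ∧ F = U * incl (Fin.castLE ha) := by
  obtain ⟨U, U', T, T', hB, hU, hT⟩ := rank_factorization B hr
  obtain ⟨G, G', hG, hG', hGF⟩ := extend_to_invertible ha (T * Z) (F' * U) (by
    rw [← Matrix.mul_assoc, Matrix.mul_assoc F', ← hB, Matrix.mul_assoc, ← hZ, hF])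
  obtain ⟨Q, Q', hQ, hQ', hQT⟩ := extend_to_invertible hb (T' * G) (G' * T) (by
    rw [← Matrix.mul_assoc, Matrix.mul_assoc G', hT, Matrix.mul_one, hG'])
  have hJ := incl_transpose_mul (Fin.castLE hb) (Fin.castLE_injective hb)
  set J := incl (Fin.castLE hb)
  -- In the coordinates `Q` the matrix of `B` is `S = [1 *]`. Multiplying by the unipotent
  -- `1 + J * (Jᵀ - S)` clears the block `*`.
  set S := G' * T * Q
  have hSJ : S * J = 1 := by
    simp only [S, Matrix.mul_assoc]
    rw [hQT, ← Matrix.mul_assoc T, hT, Matrix.one_mul, hG']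
  have hN : J * (Jᵀ - S) * (J * (Jᵀ - S)) = 0 := by
    rw [← Matrix.mul_assoc, Matrix.mul_assoc J, Matrix.sub_mul, hJ, hSJ, sub_self]
    simp
  refine ⟨U * G, G' * U', Q * (1 + J * (Jᵀ - S)), (1 - J * (Jᵀ - S)) * Q', ?_, ?_, ?_, ?_, ?_⟩
  · rw [← Matrix.mul_assoc, Matrix.mul_assoc G', hU, Matrix.mul_one, hG']
  · have : (1 + J * (Jᵀ - S)) * (1 - J * (Jᵀ - S)) = 1 := by
      rw [add_mul, mul_sub, mul_sub, hN]
      simp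
    rw [← Matrix.mul_assoc, Matrix.mul_assoc Q, this, Matrix.mul_one, hQ]
  · have : (1 - J * (Jᵀ - S)) * (1 + J * (Jᵀ - S)) = 1 := by
      rw [sub_mul, mul_add, mul_add, hN]
      simp
    rw [← Matrix.mul_assoc, Matrix.mul_assoc _ Q' Q, hQ', Matrix.mul_one, this]
  · have h1 : B * Q = U * G * S := by
      simp only [S]
      rw [hB, ← Matrix.mul_assoc, ← Matrix.mul_assoc, Matrix.mul_assoc U G, hG, Matrix.mul_one]
    rw [← Matrix.mul_assoc, h1, Matrix.mul_assoc, Matrix.mul_add, ← Matrix.mul_assoc S, hSJ]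
    simp
  · rw [Matrix.mul_assoc, hGF, ← Matrix.mul_assoc, ← hB, hZ]

/-! ### Partial permutation matrices and diagonal blocks -/

theorem rank_incl_diagonal {t p q : ℕ} (r : Fin t → Fin p) (c : Fin t → Fin q)
    (hr : Function.Injective r) (hc : Function.Injective c) (w : Fin t → ℂ) (hw : ∀ k, w k ≠ 0) :
    (incl r * Matrix.diagonal w * (incl c)ᵀ).rank = t := by
  rw [rank_mul_of_rightInv _ _ _ (incl_transpose_mul c hc),
    rank_mul_of_leftInv _ _ _ (incl_transpose_mul r hr)]
  have := Matrix.rank_diagonal w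
  rw [this]
  simp [hw]

theorem incl_diagonal_apply {t p q : ℕ} (r : Fin t → Fin p) (c : Fin t → Fin q) (w : Fin t → ℂ)
    (i : Fin p) (j : Fin q) :
    (incl r * Matrix.diagonal w * (incl c)ᵀ) i j = ∑ k, if i = r k ∧ j = c k then w k else 0 := by
  rw [Matrix.mul_apply]
  refine Finset.sum_congr rfl fun k _ => ?_
  simp only [Matrix.mul_diagonal, Matrix.transpose_apply, incl, Matrix.submatrix_apply, id,
    Matrix.one_apply]
  split_ifs <;> simp_all

/-- The `b × c` rectangular diagonal matrix with diagonal entry `f i` at the positions `l ≤ i < h` and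
`0` at the others. -/
def band (b c l h : ℕ) (f : ℕ → ℂ) : Matrix (Fin b) (Fin c) ℂ :=
  Matrix.of fun i j => if (i : ℕ) = j ∧ l ≤ i ∧ (i : ℕ) < h then f i else 0

theorem rank_band {b c l h : ℕ} (f : ℕ → ℂ) (hb : h ≤ b) (hc : h ≤ c)
    (hf : ∀ i, l ≤ i → i < h → f i ≠ 0) : (band b c l h f).rank = h - l := by
  let r : Fin (h - l) → Fin b := fun k => ⟨l + k, by omega⟩
  let s : Fin (h - l) → Fin c := fun k => ⟨l + k, by omega⟩
  have hr : Function.Injective r := fun x y hxy => by simpa [r, Fin.ext_iff] using hxy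
  have hs : Function.Injective s := fun x y hxy => by simpa [s, Fin.ext_iff] using hxy
  have : band b c l h f = incl r * Matrix.diagonal (fun k : Fin (h - l) => f (l + k)) * (incl s)ᵀ := by
    ext i j
    rw [incl_diagonal_apply]
    simp only [band, Matrix.of_apply, r, s, Fin.ext_iff]
    split_ifs with hij
    · rw [Finset.sum_eq_single ⟨i - l, by omega⟩]
      · rw [if_pos (by constructor <;> simp <;> omega)]
        congr 1
        simp
        omega
      · intro k _ hk
        rw [if_neg]
        intro h'
        exact hk (Fin.ext (by simp; omega))
      · simp
    · symm
      apply Finset.sum_eq_zero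
      intro k _
      rw [if_neg]
      omega
  rw [this]
  exact rank_incl_diagonal r s hr hs _ fun k => hf _ (by omega) (by omega)

/-- A constant diagonal block on the positions `[d, d + s)` is the leading `b × c` block of a `p × q`
matrix of rank `t`, provided that `s ≤ t ≤ min p q` and that the `t - s` missing entries fit into the `p - b` last rows and the
`q - c` last columns. -/
theorem exists_fill {p q b c s t d : ℕ} (w : ℂ) (hw : w ≠ 0) (hb : b ≤ p) (hc : c ≤ q)
    (hst : s ≤ t) (hdb : d + s ≤ b) (hdc : d + s ≤ c) (htp : t ≤ p) (htq : t ≤ q)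
    (h : t ≤ s + (p - b) + (q - c)) :
    ∃ Y : Matrix (Fin p) (Fin q) ℂ, Y.rank = t ∧
      (incl (Fin.castLE hb))ᵀ * Y * incl (Fin.castLE hc) = band b c d (d + s) fun _ => w := by
  obtain ⟨u, v, hu, hv, huv⟩ : ∃ u v, u ≤ p - b ∧ v ≤ q - c ∧ s + u + v = t :=
    ⟨min (t - s) (p - b), t - s - min (t - s) (p - b), by omega, by omega, by omega⟩
  -- The nonzero entries sit at `(r k, l k)`, `k < t`. The first `s` form the diagonal block. The next
  -- `u` use the last `u` rows, and columns that continue the block cyclically within the first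
  -- `q - v`. The final `v` use the last `v` columns, and rows that continue the block cyclically
  -- within the first `p - u`. The inequality `t ≤ min p q` prevents repetitions.
  let r : Fin t → Fin p := fun k => ⟨if (k : ℕ) < s then d + k
    else if (k : ℕ) < s + u then p - u + (k - s)
    else if d + (k - u) < p - u then d + (k - u) else d + (k - u) - (p - u), by split_ifs <;> omega⟩
  let l : Fin t → Fin q := fun k => ⟨if (k : ℕ) < s + u then
      (if d + k < q - v then d + k else d + k - (q - v))
    else q - v + (k - (s + u)), by split_ifs <;> omega⟩
  have hr : Function.Injective r := fun x y hxy => by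
    simp only [r, Fin.ext_iff] at hxy ⊢
    split_ifs at hxy <;> omega
  have hl : Function.Injective l := fun x y hxy => by
    simp only [l, Fin.ext_iff] at hxy ⊢
    split_ifs at hxy <;> omega
  refine ⟨_, rank_incl_diagonal r l hr hl (fun _ => w) fun _ => hw, ?_⟩
  rw [mul_incl, ← Matrix.transpose_transpose (_ᵀ * _), Matrix.transpose_mul, 
    Matrix.transpose_transpose, mul_incl]
  ext i j
  simp only [Matrix.submatrix_apply, Matrix.transpose_apply, id]
  rw [incl_diagonal_apply]
  simp only [band, Matrix.of_apply, Fin.ext_iff, Fin.val_castLE]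
  split_ifs with hij
  · rw [Finset.sum_eq_single ⟨i - d, by omega⟩]
    · rw [if_pos]
      simp only [r, l]
      split_ifs <;> omega
    · intro k _ hk
      rw [if_neg]
      intro h'
      apply hk
      apply Fin.ext
      simp only [r, l] at h' ⊢
      split_ifs at h' <;> omega
    · simp
  · apply Finset.sum_eq_zero
    intro k _
    rw [if_neg]
    simp only [r, l]
    split_ifs <;> omega

/-! ### Reduction to normal form and extremal ranks -/

/-- Reduction to normal form: up to rank, `A + B * X * C` is the partial identity of rank `a` plus the
leading `b × c` block of a matrix `Y` equivalent to `X`. -/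
theorem exists_same_rank_and_rank_eq {m n p q a b c : ℕ}
    (A : Matrix (Fin m) (Fin n) ℂ) (B : Matrix (Fin m) (Fin p) ℂ)
    (C : Matrix (Fin q) (Fin n) ℂ) (hA : A.rank = a) (hB : B.rank = b) (hC : C.rank = c)
    (hb : b ≤ p) (hc : c ≤ q) (hab : a ≤ b) (hac : a ≤ c)
    (M : Matrix (Fin p) (Fin n) ℂ) (hM : A = B * M)
    (N : Matrix (Fin m) (Fin q) ℂ) (hN : A = N * C)
    (Y : Matrix (Fin p) (Fin q) ℂ) : ∃ X : Matrix (Fin p) (Fin q) ℂ, X.rank = Y.rank ∧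
      (A + B * X * C).rank = (band b c 0 a (fun _ => 1) +
        (incl (Fin.castLE hb))ᵀ * Y * incl (Fin.castLE hc)).rank := by
  obtain ⟨F, F', G, G', hFG, hF, hG⟩ := rank_factorization A hA
  have hFA : F = A * G' := by rw [hFG, Matrix.mul_assoc, hG, Matrix.mul_one]
  have hGA : G = F' * A := by rw [hFG, ← Matrix.mul_assoc, hF, Matrix.one_mul]
  obtain ⟨U, U', P, P', hU, hP, hP', hBP, hFU⟩ := exists_normal_form_left B hB hb F F' hF (M * G') (by
    rw [← Matrix.mul_assoc, ← hM, hFA]) hab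
  obtain ⟨W, W', Q, Q', hW, hQ, hQ', hCQ, hGW⟩ := exists_normal_form_left Cᵀ (by rw [Matrix.rank_transpose, hC]) hc
    Gᵀ G'ᵀ (by rw [← Matrix.transpose_mul, hG, Matrix.transpose_one]) (F' * N)ᵀ (by
    rw [← Matrix.transpose_mul, Matrix.mul_assoc, ← hN, hGA]) hac
  have hW' : Wᵀ * W'ᵀ = 1 := by rw [← Matrix.transpose_mul, hW, Matrix.transpose_one]
  have hQt : Qᵀ * Q'ᵀ = 1 := by rw [← Matrix.transpose_mul, hQ', Matrix.transpose_one]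
  have hQC : Qᵀ * C = incl (Fin.castLE hc) * Wᵀ := by
    simpa using congrArg Matrix.transpose hCQ
  have hGW' : G = (incl (Fin.castLE hac))ᵀ * Wᵀ := by
    simpa using congrArg Matrix.transpose hGW
  have hband : incl (Fin.castLE hab) * (incl (Fin.castLE hac))ᵀ = band b c 0 a (fun _ => 1) := by
    rw [← Matrix.mul_one (incl (Fin.castLE hab)), ← Matrix.diagonal_one]
    ext i j
    rw [incl_diagonal_apply]
    simp only [band, Matrix.of_apply, Fin.ext_iff, Fin.val_castLE]
    split_ifs with hij
    · rw [Finset.sum_eq_single ⟨i, by omega⟩]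
      · simp [hij.1]
      · intro k _ hk
        rw [if_neg]
        exact fun h' => hk (Fin.ext h'.1.symm)
      · simp
    · apply Finset.sum_eq_zero
      intro k _
      rw [if_neg]
      omega
  refine ⟨P * Y * Qᵀ, ?_, ?_⟩
  · rw [rank_mul_of_rightInv _ _ _ hQt, rank_mul_of_leftInv _ _ _ hP']
  · rw [← hband, ← rank_mul_of_leftInv U U' _ hU, ← rank_mul_of_rightInv Wᵀ W'ᵀ _ hW']
    congr 1
    calc A + B * (P * Y * Qᵀ) * C = F * G + B * P * Y * (Qᵀ * C) := by
          simp only [hFG, Matrix.mul_assoc]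
      _ = _ := by
          rw [hBP, hQC, hFU, hGW']
          simp only [Matrix.mul_assoc, Matrix.mul_add, Matrix.add_mul]

theorem stmt14 (m n p q t : ℕ) (ht : t ≤ min p q)
    (A : Matrix (Fin m) (Fin n) ℂ) (B : Matrix (Fin m) (Fin p) ℂ)
    (C : Matrix (Fin q) (Fin n) ℂ)
    (hAB : LinearMap.range A.mulVecLin ≤ LinearMap.range B.mulVecLin)
    (hAC : LinearMap.range Aᴴ.mulVecLin ≤ LinearMap.range Cᴴ.mulVecLin) :
    (∀ X : Matrix (Fin p) (Fin q) ℂ, X.rank = t →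
      (A + B * X * C).rank ≤ min (min B.rank C.rank) (A.rank + t)) ∧
    (∃ X : Matrix (Fin p) (Fin q) ℂ, X.rank = t ∧
      (A + B * X * C).rank = min (min B.rank C.rank) (A.rank + t)) ∧
    (∀ X : Matrix (Fin p) (Fin q) ℂ, X.rank = t →
      max 0 (max ((B.rank : ℤ) + (C.rank : ℤ) - (A.rank : ℤ) + (t : ℤ)
                    - (p : ℤ) - (q : ℤ))
                 ((A.rank : ℤ) - (t : ℤ)))
        ≤ ((A + B * X * C).rank : ℤ)) ∧
    (∃ X : Matrix (Fin p) (Fin q) ℂ, X.rank = t ∧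
      ((A + B * X * C).rank : ℤ)
        = max 0 (max ((B.rank : ℤ) + (C.rank : ℤ) - (A.rank : ℤ) + (t : ℤ)
                    - (p : ℤ) - (q : ℤ))
                 ((A.rank : ℤ) - (t : ℤ)))) := by
  obtain ⟨M, hM⟩ := exists_mul_of_range_le A B hAB
  obtain ⟨N, hN⟩ : ∃ N : Matrix (Fin m) (Fin q) ℂ, A = N * C := by
    obtain ⟨Z, hZ⟩ := exists_mul_of_range_le Aᴴ Cᴴ hAC
    exact ⟨Zᴴ, by simpa [Matrix.conjTranspose_mul] using congrArg Matrix.conjTranspose hZ⟩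
  have hab : A.rank ≤ B.rank := by
    conv_lhs => rw [hM]
    exact Matrix.rank_mul_le_left _ _
  have hac : A.rank ≤ C.rank := by
    conv_lhs => rw [hN]
    exact Matrix.rank_mul_le_right _ _
  have hb : B.rank ≤ p := Matrix.rank_le_width B
  have hc : C.rank ≤ q := Matrix.rank_le_height C
  have red := exists_same_rank_and_rank_eq A B C rfl rfl rfl hb hc hab hac M hM N hN
  refine ⟨fun X hX => ?_, ?_, fun X hX => ?_, ?_⟩
  · have h1 : (A + B * X * C).rank ≤ B.rank := by
      have : A + B * X * C = B * (M + X * C) := by rw [Matrix.mul_add, ← hM, Matrix.mul_assoc]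
      rw [this]
      exact Matrix.rank_mul_le_left _ _
    have h2 : (A + B * X * C).rank ≤ C.rank := by
      have : A + B * X * C = (N + B * X) * C := by rw [Matrix.add_mul, ← hN]
      rw [this]
      exact Matrix.rank_mul_le_right _ _
    have h3 := rank_add_le' A (B * X * C)
    have h4 := Matrix.rank_mul_le_left (B * X) C
    have h5 := Matrix.rank_mul_le_right B X
    omega
  · generalize A.rank = a, B.rank = b, C.rank = c at *
    obtain ⟨s, hs⟩ : ∃ s, s = min t (min b c) := ⟨_, rfl⟩
    obtain ⟨r, hr⟩ : ∃ r, r = min (min b c) (a + t) := ⟨_, rfl⟩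
    obtain ⟨Y, hY, hYb⟩ := exists_fill (s := s) (t := t) (d := r - s) 1 one_ne_zero hb hc
      (by omega) (by omega) (by omega) (by omega) (by omega) (by omega)
    obtain ⟨X, hX, hXr⟩ := red Y
    refine ⟨X, hX.trans hY, ?_⟩
    have : band b c 0 a (fun _ => 1) + band b c (r - s) (r - s + s) (fun _ => 1)
        = band b c 0 r (fun i => (if i < a then 1 else 0) + if r - s ≤ i then 1 else 0) := by
      ext i j
      simp only [band, Matrix.add_apply, Matrix.of_apply]
      split_ifs <;> first | omega | simp
    rw [hXr, hYb, this, rank_band _ (by omega) (by omega), ← hr, Nat.sub_zero]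
    intro i _ hi
    split_ifs <;> first | omega | norm_num
  · have h1 := rank_add_le' (A + B * X * C) (-A)
    have h2 := rank_add_le' (A + B * X * C) (-(B * X * C))
    rw [add_neg_cancel_right, rank_neg'] at h2
    rw [add_comm A, add_neg_cancel_right, rank_neg', add_comm _ A] at h1
    have h3 := sylvester B X
    have h4 := sylvester (B * X) C
    have h5 := Matrix.rank_mul_le_left (B * X) C
    have h6 := Matrix.rank_mul_le_right B X
    omega
  · generalize A.rank = a, B.rank = b, C.rank = c at *
    obtain ⟨s, hs⟩ : ∃ s, s = max (t - (p - b) - (q - c)) (min a t) := ⟨_, rfl⟩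
    obtain ⟨Y, hY, hYb⟩ := exists_fill (s := s) (t := t) (d := 0) (-1) (by norm_num) hb hc
      (by omega) (by omega) (by omega) (by omega) (by omega) (by omega)
    obtain ⟨X, hX, hXr⟩ := red Y
    refine ⟨X, hX.trans hY, ?_⟩
    have : band b c 0 a (fun _ => 1) + band b c 0 (0 + s) (fun _ => -1)
        = band b c (min a s) (max a s) (fun _ => if s < a then 1 else -1) := by
      ext i j
      simp only [band, Matrix.add_apply, Matrix.of_apply]
      split_ifs <;> first | omega | simp
    rw [hXr, hYb, this, rank_band _ (by omega) (by omega)]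
    · omega
    · intro i _ hi
      split_ifs <;> norm_num
end

section
/- Let B ∈ ℂ^{m×p} and C ∈ ℂ^{q×n} be given nonzero matrices and let t be an integer with 1 ≤ t ≤ min{p, q}. Then (1) the maximum of r(BXC) over all X ∈ ℂ^{p×q} with r(X) = t equals min{ r(B), r(C), t }, and (2) the minimum of r(BXC) over all X ∈ ℂ^{p×q} with r(X) = t equals max{ 0, r(B) + r(C) + t − p − q }; both extremal values are attained. -/
/-! Bring `B` and `C` to normal form:
`exists_normal_form` gives an invertible `U` such that `B * U` and the coordinate projection
`proj p r(B)` are left multiples of each other, and `exists_normal_form'` gives an invertible `P`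
such that `P * C` and `proj q r(C)` are right multiples of each other.
For `X = U * E * P` the rank of `B * X * C` is then that of `proj p r(B) * E * proj q r(C)`, the
top left `r(B) × r(C)` block of `E` (`exists_rank_mul_mul_eq`).

Both extremal values come from partial permutation matrices `E` with `t` ones, at the positions
`(f k, g k)` for `k < t`: the block then has as many ones as there are `k` with `f k < r(B)` and `g k < r(C)`.
The maximum is reached on the main diagonal, `f k = g k = k`. The minimum is reached on an
antidiagonal in the bottom right corner, `f k = p - t + k` and `g k = q - 1 - k`, so that the rows
`≥ r(B)` occur at the last values of `k` and the columns `≥ r(C)` at the first values: the two kinds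
of entries lost outside the block overlap as little as possible.

The lower bound for all `X` is Sylvester's rank inequality (`rank_add_rank_le`) used twice. -/

open Matrix

/-- The coordinate projection of `ℂ^p` onto its first `b` coordinates, as a diagonal matrix. -/
def proj (p b : ℕ) : Matrix (Fin p) (Fin p) ℂ :=
  diagonal fun i => if i.val < b then 1 else 0

lemma rank_add_le'_s17 {k l : ℕ} (M N : Matrix (Fin k) (Fin l) ℂ) :
    (M + N).rank ≤ M.rank + N.rank := by
  have h : LinearMap.range (M + N).mulVecLin ≤
      LinearMap.range M.mulVecLin ⊔ LinearMap.range N.mulVecLin := by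
    rintro _ ⟨x, rfl⟩
    rw [Matrix.mulVecLin_add, LinearMap.add_apply]
    exact Submodule.add_mem_sup ⟨x, rfl⟩ ⟨x, rfl⟩
  exact (Submodule.finrank_mono h).trans (Submodule.finrank_add_le_finrank_add_finrank _ _)

lemma exists_square_normal_form {p : ℕ} (M : Matrix (Fin p) (Fin p) ℂ) :
    ∃ V U : Matrix (Fin p) (Fin p) ℂ, IsUnit V ∧ IsUnit U ∧ V * M * U = proj p M.rank := by
  obtain ⟨V, U, e, hV, hU, h⟩ := exists_rank_normal_form M
  have hr : M.rank ≤ p := by simpa using M.rank_le_card_width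
  -- The block form is indexed by an arbitrary bijection; reorder it to put the ones first.
  let g : Fin M.rank ⊕ Fin (Fintype.card (Fin p) - M.rank) ≃ Fin p :=
    finSumFinEquiv.trans (finCongr (by simp; omega))
  let σ : Fin p ≃ Fin p := e.trans g
  refine ⟨V.submatrix σ.symm id, U.submatrix id σ.symm, ?_, ?_, ?_⟩
  · exact (isUnit_submatrix_equiv σ.symm (Equiv.refl _)).2 hV
  · exact (isUnit_submatrix_equiv (Equiv.refl _) σ.symm).2 hU
  · have h1 : V.submatrix σ.symm id * M * U.submatrix id σ.symm
        = (V * M * U).submatrix σ.symm σ.symm := by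
      ext i j
      simp [Matrix.mul_apply]
    rw [h1, h]
    ext i j
    obtain ⟨i, rfl⟩ := g.surjective i
    obtain ⟨j, rfl⟩ := g.surjective j
    have hg : ∀ x, e (σ.symm (g x)) = x := by intro x; simp [σ]
    rw [submatrix_apply, submatrix_apply, hg, hg, proj, diagonal_apply]
    simp only [g.injective.eq_iff]
    rcases i with i | i <;> rcases j with j | j <;> simp [g, Matrix.one_apply]

open scoped ComplexOrder in
/-- Rectangular normal form, without a basis of the target space: `L` is only a left inverse of
`B * U` on the coordinates that `B * U` does not kill. It comes from the square normal form of
`Bᴴ * B`, which has the same rank and the same kernel as `B`. -/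
lemma exists_normal_form {m p : ℕ} (B : Matrix (Fin m) (Fin p) ℂ) :
    ∃ (L : Matrix (Fin p) (Fin m) ℂ) (U : Matrix (Fin p) (Fin p) ℂ), IsUnit U ∧
      L * B * U = proj p B.rank ∧ B * U * proj p B.rank = B * U := by
  obtain ⟨V, U, hV, hU, h⟩ := exists_square_normal_form (Bᴴ * B)
  rw [rank_conjTranspose_mul_self] at h
  refine ⟨V * Bᴴ, U, hU, by rw [← h]; simp only [Matrix.mul_assoc], ?_⟩
  have hD : proj p B.rank * (1 - proj p B.rank) = 0 := by
    rw [proj, ← diagonal_one, diagonal_sub, diagonal_mul_diagonal, ← diagonal_zero]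
    congr 1; ext i; by_cases hi : i.val < B.rank <;> simp [hi]
  have h0 : Bᴴ * B * (U * (1 - proj p B.rank)) = 0 := by
    apply hV.mul_left_cancel
    rw [← Matrix.mul_assoc, ← Matrix.mul_assoc, h, hD, mul_zero]
  rw [conjTranspose_mul_self_mul_eq_zero, Matrix.mul_sub, Matrix.mul_sub, Matrix.mul_one,
    sub_eq_zero, ← Matrix.mul_assoc] at h0
  exact h0.symm

/-- Transposed form of `exists_normal_form`. -/
lemma exists_normal_form' {q n : ℕ} (C : Matrix (Fin q) (Fin n) ℂ) :
    ∃ (R : Matrix (Fin n) (Fin q) ℂ) (P : Matrix (Fin q) (Fin q) ℂ), IsUnit P ∧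
      P * C * R = proj q C.rank ∧ proj q C.rank * (P * C) = P * C := by
  obtain ⟨L, U, hU, h1, h2⟩ := exists_normal_form Cᵀ
  have hT : ∀ b, (proj q b)ᵀ = proj q b := fun b => diagonal_transpose _
  rw [rank_transpose] at h1 h2
  refine ⟨Lᵀ, Uᵀ, (isUnit_transpose U).2 hU, ?_, ?_⟩
  · rw [← hT, ← h1]; simp [Matrix.mul_assoc]
  · have := congrArg transpose h2
    simpa [hT] using this

lemma rank_proj (p b : ℕ) (hb : b ≤ p) : (proj p b).rank = b := by
  rw [proj, rank_diagonal]
  simp [Fintype.card_subtype, Fin.card_filter_val_lt, hb]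

lemma rank_one_sub_proj (p b : ℕ) (hb : b ≤ p) : (1 - proj p b).rank = p - b := by
  rw [proj, ← diagonal_one, diagonal_sub, rank_diagonal]
  have h := Fintype.card_subtype_compl (fun i : Fin p => i.val < b)
  simp only [Fintype.card_subtype, Fin.card_filter_val_lt, Fintype.card_fin, min_eq_right hb] at h
  rw [Fintype.card_subtype, ← h]
  congr 1; ext i; by_cases hi : i.val < b <;> simp [hi, Nat.le_of_not_lt]

/-- Sylvester's rank inequality. -/
lemma rank_add_rank_le {m p n : ℕ} (A : Matrix (Fin m) (Fin p) ℂ) (B : Matrix (Fin p) (Fin n) ℂ) :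
    A.rank + B.rank ≤ (A * B).rank + p := by
  obtain ⟨L, U, hU, h1, -⟩ := exists_normal_form A
  have hdet := (isUnit_iff_isUnit_det _).1 hU
  have hb : A.rank ≤ p := by simpa using A.rank_le_card_width
  have e1 : proj p A.rank * (U⁻¹ * B) = L * (A * B) := by
    rw [← h1, Matrix.mul_assoc (L * A), mul_nonsing_inv_cancel_left _ _ hdet, Matrix.mul_assoc]
  have e2 : (U⁻¹ * B).rank = B.rank :=
    rank_mul_eq_right_of_isUnit_det _ _ (isUnit_nonsing_inv_det _ hdet)
  have e3 : U⁻¹ * B = L * (A * B) + (1 - proj p A.rank) * (U⁻¹ * B) := by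
    rw [← e1, Matrix.sub_mul]; simp
  have e4 := rank_add_le'_s17 (L * (A * B)) ((1 - proj p A.rank) * (U⁻¹ * B))
  rw [← e3, e2] at e4
  have e5 := rank_mul_le_right L (A * B)
  have e6 := rank_mul_le_left (1 - proj p A.rank) (U⁻¹ * B)
  rw [rank_one_sub_proj _ _ hb] at e6
  omega

/-- The `p × t` matrix whose `k`-th column is the standard basis vector `e_(f k)`. -/
def cols {p t : ℕ} (f : Fin t → Fin p) : Matrix (Fin p) (Fin t) ℂ :=
  (1 : Matrix (Fin p) (Fin p) ℂ).submatrix id f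

lemma transpose_cols_mul_cols {p t : ℕ} {f : Fin t → Fin p} (hf : f.Injective) :
    (cols f)ᵀ * cols f = 1 := by
  ext i j
  simp [cols, Matrix.mul_apply, Matrix.one_apply, hf.eq_iff, eq_comm]

lemma rank_cols_mul {p q t : ℕ} {f : Fin t → Fin p} {g : Fin t → Fin q}
    (hf : f.Injective) (hg : g.Injective) (D : Matrix (Fin t) (Fin t) ℂ) :
    (cols f * D * (cols g)ᵀ).rank = D.rank := by
  apply le_antisymm
  · exact (rank_mul_le_left _ _).trans (rank_mul_le_right _ _)
  · have h : (cols f)ᵀ * (cols f * D * (cols g)ᵀ) * cols g = D := by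
      calc _ = ((cols f)ᵀ * cols f) * D * ((cols g)ᵀ * cols g) := by
            simp only [Matrix.mul_assoc]
        _ = D := by
            rw [transpose_cols_mul_cols hf, transpose_cols_mul_cols hg, one_mul, mul_one]
    conv_lhs => rw [← h]
    exact (rank_mul_le_left _ _).trans (rank_mul_le_right _ _)

lemma proj_mul_cols {p t : ℕ} (b : ℕ) (f : Fin t → Fin p) :
    proj p b * cols f = cols f * diagonal fun k => if (f k).val < b then (1 : ℂ) else 0 := by
  ext i k
  rw [proj, diagonal_mul, mul_diagonal]
  by_cases h : i = f k <;> simp [cols, h]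

/-- Transporting a partial permutation matrix with ones at the positions `(f k, g k)` through the
normal forms of `B` and `C`. -/
lemma exists_rank_mul_mul_eq {m n p q t : ℕ}
    (B : Matrix (Fin m) (Fin p) ℂ) (C : Matrix (Fin q) (Fin n) ℂ)
    {f : Fin t → Fin p} {g : Fin t → Fin q} (hf : f.Injective) (hg : g.Injective) :
    ∃ X : Matrix (Fin p) (Fin q) ℂ, X.rank = t ∧ (B * X * C).rank =
      (Finset.univ.filter fun k => (f k).val < B.rank ∧ (g k).val < C.rank).card := by
  obtain ⟨L, U, hU, h1, h2⟩ := exists_normal_form B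
  obtain ⟨R, P, hP, h3, h4⟩ := exists_normal_form' C
  set b := B.rank
  set c := C.rank
  have hU' := (isUnit_iff_isUnit_det _).1 hU
  have hP' := (isUnit_iff_isUnit_det _).1 hP
  refine ⟨U * (cols f * (cols g)ᵀ) * P, ?_, ?_⟩
  · rw [rank_mul_eq_left_of_isUnit_det _ _ hP', rank_mul_eq_right_of_isUnit_det _ _ hU']
    have := rank_cols_mul hf hg 1
    rwa [Matrix.mul_one, rank_one, Fintype.card_fin] at this
  · set E := cols f * (cols g)ᵀ with hE
    -- `B * X * C` and the block `proj p b * E * proj q c` are multiples of each other.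
    have key : (B * (U * E * P) * C).rank = (proj p b * E * proj q c).rank := by
      apply le_antisymm
      · have : B * (U * E * P) * C = (B * U) * (proj p b * E * proj q c) * (P * C) := by
          calc _ = (B * U) * E * (P * C) := by simp only [Matrix.mul_assoc]
            _ = (B * U * proj p b) * E * (proj q c * (P * C)) := by rw [h2, h4]
            _ = _ := by simp only [Matrix.mul_assoc]
        rw [this]
        exact (rank_mul_le_left _ _).trans (rank_mul_le_right _ _)
      · have : proj p b * E * proj q c = L * (B * (U * E * P) * C) * R := by
          rw [← h1, ← h3]; simp only [Matrix.mul_assoc]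
        rw [this]
        exact (rank_mul_le_left _ _).trans (rank_mul_le_right _ _)
    have hT : (cols g)ᵀ * proj q c =
        (diagonal fun k => if (g k).val < c then (1 : ℂ) else 0) * (cols g)ᵀ := by
      have := congrArg transpose (proj_mul_cols c g)
      simpa [proj] using this
    have hblock : proj p b * E * proj q c = cols f *
        (diagonal fun k => if (f k).val < b ∧ (g k).val < c then (1 : ℂ) else 0) * (cols g)ᵀ := by
      calc _ = (proj p b * cols f) * ((cols g)ᵀ * proj q c) := by
            rw [hE]; simp only [Matrix.mul_assoc]
        _ = cols f * ((diagonal fun k => if (f k).val < b then (1 : ℂ) else 0) *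
            (diagonal fun k => if (g k).val < c then (1 : ℂ) else 0)) * (cols g)ᵀ := by
            rw [proj_mul_cols, hT]; simp only [Matrix.mul_assoc]
        _ = _ := by
            rw [diagonal_mul_diagonal]
            congr 3; ext k
            by_cases h : (f k).val < b <;> simp [h]
    rw [key, hblock, rank_cols_mul hf hg, rank_diagonal, Fintype.card_subtype]
    congr 1; ext k; simp

theorem stmt17 (m n p q t : ℕ)
    (B : Matrix (Fin m) (Fin p) ℂ) (C : Matrix (Fin q) (Fin n) ℂ)
    (hB : B ≠ 0) (hC : C ≠ 0) (ht1 : 1 ≤ t) (ht : t ≤ min p q) :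
    (∀ X : Matrix (Fin p) (Fin q) ℂ, X.rank = t →
      (B * X * C).rank ≤ min (min B.rank C.rank) t) ∧
    (∃ X : Matrix (Fin p) (Fin q) ℂ, X.rank = t ∧
      (B * X * C).rank = min (min B.rank C.rank) t) ∧
    (∀ X : Matrix (Fin p) (Fin q) ℂ, X.rank = t →
      max 0 ((B.rank : ℤ) + (C.rank : ℤ) + (t : ℤ) - (p : ℤ) - (q : ℤ))
        ≤ ((B * X * C).rank : ℤ)) ∧
    (∃ X : Matrix (Fin p) (Fin q) ℂ, X.rank = t ∧
      ((B * X * C).rank : ℤ)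
        = max 0 ((B.rank : ℤ) + (C.rank : ℤ) + (t : ℤ) - (p : ℤ) - (q : ℤ))) := by
  have hp : t ≤ p := ht.trans (min_le_left _ _)
  have hq : t ≤ q := ht.trans (min_le_right _ _)
  have hb : B.rank ≤ p := by simpa using B.rank_le_card_width
  have hc : C.rank ≤ q := by simpa using C.rank_le_card_height
  refine ⟨fun X hX => ?_, ?_, fun X hX => ?_, ?_⟩
  · have h1 := rank_mul_le_left (B * X) C
    have h2 := rank_mul_le_right (B * X) C
    have h3 := rank_mul_le_left B X
    have h4 := rank_mul_le_right B X
    omega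
  · obtain ⟨X, hX, h⟩ := exists_rank_mul_mul_eq B C
      (Fin.castLE_injective hp) (Fin.castLE_injective hq)
    refine ⟨X, hX, h.trans ?_⟩
    simp only [Fin.val_castLE, ← lt_min_iff]
    rw [Fin.card_filter_val_lt, min_comm]
  · have h1 := rank_add_rank_le B X
    have h2 := rank_add_rank_le (B * X) C
    omega
  · let f : Fin t → Fin p := fun k => ⟨p - t + k.val, by omega⟩
    let g : Fin t → Fin q := fun k => ⟨q - 1 - k.val, by omega⟩
    have hf : f.Injective := fun i j h => by
      have := congrArg Fin.val h
      simp only [f] at this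
      omega
    have hg : g.Injective := fun i j h => by
      have := congrArg Fin.val h
      simp only [g] at this
      omega
    obtain ⟨X, hX, h⟩ := exists_rank_mul_mul_eq B C hf hg
    refine ⟨X, hX, ?_⟩
    -- The ones inside the block are those with `q - r(C) ≤ k < r(B) + t - p`.
    have hcard : (Finset.univ.filter fun k => (f k).val < B.rank ∧ (g k).val < C.rank).card =
        B.rank + t - p - (q - C.rank) := by
      rw [← Nat.card_Ico, ← Finset.card_map Fin.valEmbedding]
      congr 1
      ext k
      simp only [Finset.mem_map, Finset.mem_filter, Finset.mem_univ, true_and,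
        Fin.valEmbedding_apply, Finset.mem_Ico, f, g]
      constructor
      · rintro ⟨k, hk, rfl⟩
        omega
      · intro hk
        exact ⟨⟨k, by omega⟩, by simp only; omega, rfl⟩
    rw [h, hcard]
    omega
end
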